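/- Let W be a rectilinear polygonal environment with free space F, fix points s_A,s_B,t_A,t_B ∈ F, let R be a corridor, and let I(R), γ(R), and the corner squares of R_□ be as in the context. Then every connected component of I(R) other than the giant component γ(R) is contained in one of the four corner squares of R_□, and the intersection of every such component with every horizontal line and with every vertical line is connected (each such component is xy-monotone). -/

import Mathlib

open Set
open scoped ENNReal

noncomputable section

/-- The ℓ∞ norm of a point of `ℝ²`. -/
def linf (p : ℝ × ℝ) : ℝ := max |p.1| |p.2|

/-- The ℓ₁ norm of a point of `ℝ²`. -/
def l1 (p : ℝ × ℝ) : ℝ := |p.1| + |p.2|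

/-- The Euclidean distance between two points of `ℝ²`. -/
def euclDist (p q : ℝ × ℝ) : ℝ := Real.sqrt ((p.1 - q.1) ^ 2 + (p.2 - q.2) ^ 2)

/-- A closed axis-aligned rectangle with nonempty interior. -/
def IsClosedAxisRect (S : Set (ℝ × ℝ)) : Prop :=
  ∃ a b c d : ℝ, a < b ∧ c < d ∧ S = Icc a b ×ˢ Icc c d

/-- A rectilinear polygonal environment: a nonempty compact subset of the plane that is a
finite union of closed axis-aligned rectangles with nonempty interior, and that equals the
closure of its interior. -/
def IsRectilinearEnv (W : Set (ℝ × ℝ)) : Prop :=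
  W.Nonempty ∧ IsCompact W ∧
    (∃ 𝓡 : Finset (Set (ℝ × ℝ)), (∀ S ∈ 𝓡, IsClosedAxisRect S) ∧ W = ⋃ S ∈ 𝓡, S) ∧
    W = closure (interior W)

/-- The free space of a workspace `W`: placements of the center of a closed axis-aligned
unit square keeping the square inside `W`. -/
def freeSpace (W : Set (ℝ × ℝ)) : Set (ℝ × ℝ) :=
  {p | ∀ q : ℝ × ℝ, linf q ≤ 1 / 2 → p + q ∈ W}

/-- A free configuration of the two robots. -/
def FreeConf (F : Set (ℝ × ℝ)) (c : (ℝ × ℝ) × (ℝ × ℝ)) : Prop :=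
  c.1 ∈ F ∧ c.2 ∈ F ∧ 1 ≤ linf (c.1 - c.2)

/-- The ℓ₁-length (total variation w.r.t. the metric induced by the ℓ₁-norm) of a planar
path on a set of times. -/
def l1VarOn (γ : ℝ → ℝ × ℝ) (s : Set ℝ) : ℝ≥0∞ :=
  eVariationOn (fun t => (WithLp.equiv 1 (ℝ × ℝ)).symm (γ t)) s

/-- An `(s,t)`-plan: a continuous map on `[0,1]` from `s` to `t`. -/
def IsPlan (s t : (ℝ × ℝ) × (ℝ × ℝ)) (pln : ℝ → (ℝ × ℝ) × (ℝ × ℝ)) : Prop :=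
  ContinuousOn pln (Icc 0 1) ∧ pln 0 = s ∧ pln 1 = t

/-- A plan is feasible if every configuration along it is free. -/
def Feasible (F : Set (ℝ × ℝ)) (pln : ℝ → (ℝ × ℝ) × (ℝ × ℝ)) : Prop :=
  ∀ lam ∈ Icc (0 : ℝ) 1, FreeConf F (pln lam)

/-- The cost of a plan: the sum of the ℓ₁-lengths of the two robot paths. -/
def planCost (pln : ℝ → (ℝ × ℝ) × (ℝ × ℝ)) : ℝ≥0∞ :=
  l1VarOn (fun t => (pln t).1) (Icc 0 1) + l1VarOn (fun t => (pln t).2) (Icc 0 1)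

/-- An optimal `(s,t)`-plan: feasible, and of cost at most that of every feasible plan. -/
def IsOptimalPlan (F : Set (ℝ × ℝ)) (s t : (ℝ × ℝ) × (ℝ × ℝ))
    (pln : ℝ → (ℝ × ℝ) × (ℝ × ℝ)) : Prop :=
  IsPlan s t pln ∧ Feasible F pln ∧
    ∀ pln', IsPlan s t pln' → Feasible F pln' → planCost pln ≤ planCost pln'

/-- A decoupled plan: `[0,1]` splits into finitely many subintervals on each of which
one of the two robots is parked. -/
def IsDecoupled (pln : ℝ → (ℝ × ℝ) × (ℝ × ℝ)) : Prop :=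
  ∃ (n : ℕ) (τ : ℕ → ℝ), τ 0 = 0 ∧ τ n = 1 ∧ (∀ i, i < n → τ i ≤ τ (i + 1)) ∧
    ∀ i, i < n →
      (∀ a ∈ Icc (τ i) (τ (i + 1)), (pln a).1 = (pln (τ i)).1) ∨
      (∀ a ∈ Icc (τ i) (τ (i + 1)), (pln a).2 = (pln (τ i)).2)

/-- A rectilinear path: piecewise linear, with every linear piece horizontal or vertical. -/
def IsRectilinearPath (γ : ℝ → ℝ × ℝ) : Prop :=
  ∃ (n : ℕ) (τ : ℕ → ℝ), τ 0 = 0 ∧ τ n = 1 ∧ (∀ i, i < n → τ i ≤ τ (i + 1)) ∧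
    ∀ i, i < n → ∃ v : ℝ × ℝ, (v.1 = 0 ∨ v.2 = 0) ∧
      ∀ a ∈ Icc (τ i) (τ (i + 1)), γ a = γ (τ i) + (a - τ i) • v

/-- A rectilinear plan: both robot paths are rectilinear. -/
def IsRectilinearPlan (pln : ℝ → (ℝ × ℝ) × (ℝ × ℝ)) : Prop :=
  IsRectilinearPath (fun t => (pln t).1) ∧ IsRectilinearPath (fun t => (pln t).2)

/-- An alternating path: horizontal and vertical pieces (possibly of zero length)
alternate. -/
def IsAlternatingPath (γ : ℝ → ℝ × ℝ) : Prop :=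
  ∃ (n : ℕ) (τ : ℕ → ℝ) (d : ℕ → Bool), τ 0 = 0 ∧ τ n = 1 ∧
    (∀ i, i < n → τ i ≤ τ (i + 1)) ∧
    (∀ i, i + 1 < n → d (i + 1) = !d i) ∧
    ∀ i, i < n → ∃ v : ℝ × ℝ,
      (if d i = true then v.2 = 0 else v.1 = 0) ∧
      ∀ a ∈ Icc (τ i) (τ (i + 1)), γ a = γ (τ i) + (a - τ i) • v

/-- An alternating plan. -/
def IsAlternatingPlan (pln : ℝ → (ℝ × ℝ) × (ℝ × ℝ)) : Prop :=
  IsAlternatingPath (fun t => (pln t).1) ∧ IsAlternatingPath (fun t => (pln t).2)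

/-- `y` is the height of a horizontal edge of `∂F`. -/
def IsHorizEdgeY (F : Set (ℝ × ℝ)) (y : ℝ) : Prop :=
  ∃ a b : ℝ, a < b ∧ (Icc a b ×ˢ ({y} : Set ℝ)) ⊆ frontier F

/-- `x` is the abscissa of a vertical edge of `∂F`. -/
def IsVertEdgeX (F : Set (ℝ × ℝ)) (x : ℝ) : Prop :=
  ∃ a b : ℝ, a < b ∧ (({x} : Set ℝ) ×ˢ Icc a b) ⊆ frontier F

/-- `y` is the height of a horizontal `i`-line for some `i ≤ k` (w.r.t. the free space `F`
and the set `P` of the four source/target points). -/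
def IsHorizLineY (F : Set (ℝ × ℝ)) (P : Set (ℝ × ℝ)) (k : ℕ) (y : ℝ) : Prop :=
  ∃ i : ℕ, i ≤ k ∧
    ((∃ y₀ : ℝ, IsHorizEdgeY F y₀ ∧ |y - y₀| = (i : ℝ)) ∨ ∃ p ∈ P, |y - p.2| = (i : ℝ))

/-- `x` is the abscissa of a vertical `i`-line for some `i ≤ k`. -/
def IsVertLineX (F : Set (ℝ × ℝ)) (P : Set (ℝ × ℝ)) (k : ℕ) (x : ℝ) : Prop :=
  ∃ i : ℕ, i ≤ k ∧
    ((∃ x₀ : ℝ, IsVertEdgeX F x₀ ∧ |x - x₀| = (i : ℝ)) ∨ ∃ p ∈ P, |x - p.1| = (i : ℝ))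

/-- A grid point: a point of `F` lying on a horizontal grid line and a vertical grid line. -/
def IsGridPoint (F : Set (ℝ × ℝ)) (P : Set (ℝ × ℝ)) (u : ℝ × ℝ) : Prop :=
  u ∈ F ∧ IsHorizLineY F P 2 u.2 ∧ IsVertLineX F P 2 u.1

/-- A grid edge: a closed segment in `F` joining two grid points on a common grid line, with
no grid point in its relative interior. -/
def IsGridEdge (F P : Set (ℝ × ℝ)) (u v : ℝ × ℝ) : Prop :=
  IsGridPoint F P u ∧ IsGridPoint F P v ∧ (u.1 = v.1 ∨ u.2 = v.2) ∧
    segment ℝ u v ⊆ F ∧ ∀ w ∈ openSegment ℝ u v, ¬ IsGridPoint F P w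

/-- A vertex of the configuration graph. -/
def ConfVertex (F P : Set (ℝ × ℝ)) (u : (ℝ × ℝ) × (ℝ × ℝ)) : Prop :=
  IsGridPoint F P u.1 ∧ IsGridPoint F P u.2 ∧ 1 ≤ linf (u.1 - u.2)

/-- An edge of the configuration graph. -/
def ConfEdge (F P : Set (ℝ × ℝ)) (u v : (ℝ × ℝ) × (ℝ × ℝ)) : Prop :=
  ConfVertex F P u ∧ ConfVertex F P v ∧
    ((u.1 = v.1 ∧ IsGridEdge F P u.2 v.2) ∨ (u.2 = v.2 ∧ IsGridEdge F P u.1 v.1))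

/-- A path in `S` from `p` to `q`. -/
def IsPathIn (S : Set (ℝ × ℝ)) (p q : ℝ × ℝ) (γ : ℝ → ℝ × ℝ) : Prop :=
  ContinuousOn γ (Icc 0 1) ∧ γ 0 = p ∧ γ 1 = q ∧ ∀ t ∈ Icc (0 : ℝ) 1, γ t ∈ S

/-- The ℓ₁-length of a path parameterized over `[0,1]`. -/
def pathLen (γ : ℝ → ℝ × ℝ) : ℝ≥0∞ := l1VarOn γ (Icc 0 1)

/-- A shortest path in `S` from `p` to `q` (w.r.t. ℓ₁-length). -/
def IsShortestPathIn (S : Set (ℝ × ℝ)) (p q : ℝ × ℝ) (γ : ℝ → ℝ × ℝ) : Prop :=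
  IsPathIn S p q γ ∧ ∀ γ', IsPathIn S p q γ' → pathLen γ ≤ pathLen γ'

/-- An x-monotone path. -/
def XMonotone (γ : ℝ → ℝ × ℝ) : Prop :=
  MonotoneOn (fun t => (γ t).1) (Icc 0 1) ∨ AntitoneOn (fun t => (γ t).1) (Icc 0 1)

/-- A y-monotone path. -/
def YMonotone (γ : ℝ → ℝ × ℝ) : Prop :=
  MonotoneOn (fun t => (γ t).2) (Icc 0 1) ∨ AntitoneOn (fun t => (γ t).2) (Icc 0 1)

/-- An xy-monotone path. -/
def XYMonotone (γ : ℝ → ℝ × ℝ) : Prop := XMonotone γ ∧ YMonotone γ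

/-- The union of the primary horizontal lines (horizontal 0-lines and 1-lines). -/
def primaryHorizSet (F P : Set (ℝ × ℝ)) : Set (ℝ × ℝ) :=
  {p | IsHorizLineY F P 1 p.2}

/-- A corridor: the closure of a connected component of `F` minus the primary horizontal
lines. -/
def IsCorridor (F P : Set (ℝ × ℝ)) (R : Set (ℝ × ℝ)) : Prop :=
  ∃ c ∈ F \ primaryHorizSet F P,
    R = closure (connectedComponentIn (F \ primaryHorizSet F P) c)

/-- `C` is a connected component of `S`. -/
def IsCompOf (S C : Set (ℝ × ℝ)) : Prop := ∃ c ∈ S, C = connectedComponentIn S c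

/-- An x-separated configuration. -/
def XSep (c : (ℝ × ℝ) × (ℝ × ℝ)) : Prop := 1 ≤ |c.1.1 - c.2.1|

/-- A y-separated configuration. -/
def YSep (c : (ℝ × ℝ) × (ℝ × ℝ)) : Prop := 1 ≤ |c.1.2 - c.2.2|

/-- Two configurations have the same x-order. -/
def SameXOrder (c d : (ℝ × ℝ) × (ℝ × ℝ)) : Prop :=
  Real.sign (c.1.1 - c.2.1) = Real.sign (d.1.1 - d.2.1)

/-- Two configurations have the same y-order. -/
def SameYOrder (c d : (ℝ × ℝ) × (ℝ × ℝ)) : Prop :=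
  Real.sign (c.1.2 - c.2.2) = Real.sign (d.1.2 - d.2.2)

/-- During `[a,b]` the path `γ` traverses (affinely) a straight axis-parallel segment
contained in `F` whose endpoints are grid points. -/
def MoveSeg (F P : Set (ℝ × ℝ)) (γ : ℝ → ℝ × ℝ) (a b : ℝ) : Prop :=
  IsGridPoint F P (γ a) ∧ IsGridPoint F P (γ b) ∧
    segment ℝ (γ a) (γ b) ⊆ F ∧
    ∃ v : ℝ × ℝ, (v.1 = 0 ∨ v.2 = 0) ∧ ∀ t ∈ Icc a b, γ t = γ a + (t - a) • v

/-- A canonical-grid plan: a rectilinear decoupled plan that is a finite concatenation of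
moves in each of which one robot is parked at a grid point while the other traverses a
straight axis-parallel segment of the grid contained in `F`; in particular, every
breakpoint of either robot path is a grid point. -/
def IsCanonicalGridPlan (F P : Set (ℝ × ℝ)) (pln : ℝ → (ℝ × ℝ) × (ℝ × ℝ)) : Prop :=
  IsRectilinearPlan pln ∧ IsDecoupled pln ∧
    ∃ (n : ℕ) (τ : ℕ → ℝ), τ 0 = 0 ∧ τ n = 1 ∧ (∀ i, i < n → τ i ≤ τ (i + 1)) ∧
      ∀ i, i < n →
        (IsGridPoint F P (pln (τ i)).1 ∧
            (∀ a ∈ Icc (τ i) (τ (i + 1)), (pln a).1 = (pln (τ i)).1) ∧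
            MoveSeg F P (fun t => (pln t).2) (τ i) (τ (i + 1))) ∨
        (IsGridPoint F P (pln (τ i)).2 ∧
            (∀ a ∈ Icc (τ i) (τ (i + 1)), (pln a).2 = (pln (τ i)).2) ∧
            MoveSeg F P (fun t => (pln t).1) (τ i) (τ (i + 1)))

/-- A path in the configuration graph from `s` to `t` with `k` edges. -/
def IsGraphPath (F P : Set (ℝ × ℝ)) (s t : (ℝ × ℝ) × (ℝ × ℝ)) (k : ℕ)
    (u : ℕ → (ℝ × ℝ) × (ℝ × ℝ)) : Prop :=
  u 0 = s ∧ u k = t ∧ ∀ j, j < k → ConfEdge F P (u j) (u (j + 1))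

/-- The total weight (ℓ₁-distance in `ℝ⁴`) of a path in the configuration graph. -/
def graphPathWeight (k : ℕ) (u : ℕ → (ℝ × ℝ) × (ℝ × ℝ)) : ℝ :=
  ∑ j ∈ Finset.range k, (l1 ((u (j + 1)).1 - (u j).1) + l1 ((u (j + 1)).2 - (u j).2))

/-- `pln` traverses the edges of the graph path `u` one after another (linearly
interpolating along each edge). -/
def IsEdgeTraversal (pln : ℝ → (ℝ × ℝ) × (ℝ × ℝ)) (k : ℕ)
    (u : ℕ → (ℝ × ℝ) × (ℝ × ℝ)) : Prop :=
  (k = 0 → ∀ a ∈ Icc (0 : ℝ) 1, pln a = u 0) ∧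
    ∀ j, j < k → ∀ a ∈ Icc ((j : ℝ) / k) (((j : ℝ) + 1) / k),
      pln a = u j + ((a - (j : ℝ) / k) * k) • (u (j + 1) - u j)

/-- A blocked pair for the corridor `[xlo,xhi] × [ylo,yhi]`. -/
def BlockedPair (F : Set (ℝ × ℝ)) (xlo xhi ylo yhi : ℝ) (u v : ℝ × ℝ) : Prop :=
  ∃ ρ ρ' edge : Set (ℝ × ℝ),
    ((ρ = Ico (xlo - 1) xlo ×ˢ Ico (ylo - 1) ylo ∧
        ρ' = Ico (xlo - 1) xlo ×ˢ Ioc yhi (yhi + 1) ∧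
        edge = ({xlo} : Set ℝ) ×ˢ Icc (ylo - 1) (yhi + 1)) ∨
      (ρ = Ioc xhi (xhi + 1) ×ˢ Ico (ylo - 1) ylo ∧
        ρ' = Ioc xhi (xhi + 1) ×ˢ Ioc yhi (yhi + 1) ∧
        edge = ({xhi} : Set ℝ) ×ˢ Icc (ylo - 1) (yhi + 1))) ∧
    ∃ φ φ' : Set (ℝ × ℝ), IsCompOf (ρ ∩ F) φ ∧ IsCompOf (ρ' ∩ F) φ' ∧
      (closure φ ∩ edge).Nonempty ∧ (closure φ' ∩ edge).Nonempty ∧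
      ((u ∈ φ ∧ v ∈ φ') ∨ (u ∈ φ' ∧ v ∈ φ))

/-- `[ν₁,ν₂] ⊆ [lam1,lam2]` is an unsafe interval for the plan `pln` w.r.t. the influence
region `IR`. -/
def IsUnsafeInterval (IR : Set (ℝ × ℝ)) (pln : ℝ → (ℝ × ℝ) × (ℝ × ℝ))
    (lam1 lam2 ν₁ ν₂ : ℝ) : Prop :=
  lam1 ≤ ν₁ ∧ ν₁ ≤ ν₂ ∧ ν₂ ≤ lam2 ∧
    (∀ ν ∈ Icc ν₁ ν₂, (pln ν).2 ∈ IR ∧ YSep (pln ν)) ∧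
    (∀ a b : ℝ, lam1 ≤ a → a ≤ ν₁ → ν₂ ≤ b → b ≤ lam2 →
      (∀ ν ∈ Icc a b, (pln ν).2 ∈ IR ∧ YSep (pln ν)) → a = ν₁ ∧ b = ν₂) ∧
    ∃ ν ∈ Icc ν₁ ν₂, ¬ XSep (pln ν)


/-!
A unit square whose centre moves along an axis-parallel segment of length at most one never leaves
the union of its two extreme positions. Hence two aligned points of the free space at distance at
most one lie in the same component of any convex window of it. A point of the window sharing a
coordinate with a point of `R` is aligned with, and within distance one of, some point of `R`;
so a component other than the giant one has both coordinate projections disjoint from those of `R`,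
which by connectedness puts it in one corner square. There any two of its points are within
distance one, so that its axis-parallel sections are convex.
-/

/-- A planar set is axis-bridged at scale `δ` if it contains every axis-parallel segment of length
at most `δ` whose endpoints it contains. This is the property of free spaces that controls their
components at unit scale. The length of an axis-parallel segment is encoded as the sup distance of
its endpoints. -/
def IsAxisBridged (δ : ℝ) (S : Set (ℝ × ℝ)) : Prop :=
  ∀ ⦃a⦄, a ∈ S → ∀ ⦃b⦄, b ∈ S → (a.1 = b.1 ∨ a.2 = b.2) → dist a b ≤ δ → segment ℝ a b ⊆ S

section FreeSpace

lemma linf_eq_norm (p : ℝ × ℝ) : linf p = ‖p‖ := rfl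

lemma freeSpace_eq_setOf_closedBall_subset (W : Set (ℝ × ℝ)) :
    freeSpace W = {p | Metric.closedBall p (1 / 2) ⊆ W} := by
  ext p
  refine ⟨fun hp x hx => ?_, fun hp q hq => hp ?_⟩
  · simpa using hp (x - p) (by rwa [linf_eq_norm, ← dist_eq_norm])
  · simpa [linf_eq_norm] using hq

lemma closedBall_subset_union_closedBall_of_mem_segment {r a b z : ℝ} (hz : z ∈ segment ℝ a b)
    (hab : dist a b ≤ 2 * r) :
    Metric.closedBall z r ⊆ Metric.closedBall a r ∪ Metric.closedBall b r := by
  intro x hx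
  rw [segment_eq_uIcc, mem_uIcc] at hz
  rw [Real.dist_eq, abs_le] at hab
  simp only [Real.closedBall_eq_Icc, mem_union, mem_Icc] at hx ⊢
  grind

lemma closedBall_prod_subset_union_closedBall_of_mem_segment {r : ℝ} {a b z : ℝ × ℝ}
    (hz : z ∈ segment ℝ a b) (hax : a.1 = b.1 ∨ a.2 = b.2) (hab : dist a b ≤ 2 * r) :
    Metric.closedBall z r ⊆ Metric.closedBall a r ∪ Metric.closedBall b r := by
  obtain ⟨a₁, a₂⟩ := a
  obtain ⟨b₁, b₂⟩ := b
  obtain rfl | rfl : a₁ = b₁ ∨ a₂ = b₂ := hax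
  · rw [← Prod.image_mk_segment_right] at hz
    obtain ⟨t, ht, rfl⟩ := hz
    rw [dist_prod_same_left] at hab
    simp only [← closedBall_prod_same, ← prod_union]
    exact prod_mono_right (closedBall_subset_union_closedBall_of_mem_segment ht hab)
  · rw [← Prod.image_mk_segment_left] at hz
    obtain ⟨t, ht, rfl⟩ := hz
    rw [dist_prod_same_right] at hab
    simp only [← closedBall_prod_same, ← union_prod]
    exact prod_mono_left (closedBall_subset_union_closedBall_of_mem_segment ht hab)

lemma isAxisBridged_setOf_closedBall_subset (r : ℝ) (W : Set (ℝ × ℝ)) :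
    IsAxisBridged (2 * r) {p | Metric.closedBall p r ⊆ W} :=
  fun _ ha _ hb hax hab _ hz =>
    (closedBall_prod_subset_union_closedBall_of_mem_segment hz hax hab).trans (union_subset ha hb)

lemma isAxisBridged_freeSpace (W : Set (ℝ × ℝ)) : IsAxisBridged 1 (freeSpace W) := by
  rw [freeSpace_eq_setOf_closedBall_subset]
  simpa using isAxisBridged_setOf_closedBall_subset (1 / 2) W

end FreeSpace

namespace IsCompOf

variable {S C D : Set (ℝ × ℝ)}

lemma subset (hC : IsCompOf S C) : C ⊆ S := by
  obtain ⟨c, -, rfl⟩ := hC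
  exact connectedComponentIn_subset S c

lemma isPreconnected (hC : IsCompOf S C) : IsPreconnected C := by
  obtain ⟨c, -, rfl⟩ := hC
  exact isPreconnected_connectedComponentIn

lemma eq_connectedComponentIn (hC : IsCompOf S C) {p : ℝ × ℝ} (hp : p ∈ C) :
    C = connectedComponentIn S p := by
  obtain ⟨c, -, rfl⟩ := hC
  exact connectedComponentIn_eq hp

lemma eq_of_mem_of_mem (hC : IsCompOf S C) (hD : IsCompOf S D) {p : ℝ × ℝ} (hpC : p ∈ C)
    (hpD : p ∈ D) : C = D :=
  (hC.eq_connectedComponentIn hpC).trans (hD.eq_connectedComponentIn hpD).symm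

end IsCompOf

lemma IsCorridor.nonempty {F P R : Set (ℝ × ℝ)} (hR : IsCorridor F P R) : R.Nonempty := by
  obtain ⟨c, hc, rfl⟩ := hR
  exact ⟨c, subset_closure (mem_connectedComponentIn hc)⟩

namespace IsAxisBridged

variable {δ : ℝ} {S C D K L : Set (ℝ × ℝ)}

lemma inter_convex (hS : IsAxisBridged δ S) (hK : Convex ℝ K) : IsAxisBridged δ (S ∩ K) :=
  fun _ ha _ hb hax hab =>
    subset_inter (hS ha.1 hb.1 hax hab) (hK.segment_subset ha.2 hb.2)

lemma segment_subset_of_isCompOf (hS : IsAxisBridged δ S) (hC : IsCompOf S C) {a b : ℝ × ℝ}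
    (ha : a ∈ C) (hb : b ∈ S) (hax : a.1 = b.1 ∨ a.2 = b.2) (hab : dist a b ≤ δ) :
    segment ℝ a b ⊆ C := by
  rw [hC.eq_connectedComponentIn ha]
  exact (convex_segment a b).isPreconnected.subset_connectedComponentIn (left_mem_segment ℝ a b)
    (hS (hC.subset ha) hb hax hab)

lemma of_isCompOf (hS : IsAxisBridged δ S) (hC : IsCompOf S C) : IsAxisBridged δ C :=
  fun _ ha _ hb => hS.segment_subset_of_isCompOf hC ha (hC.subset hb)

lemma lt_dist_of_isCompOf_of_ne (hS : IsAxisBridged δ S) (hC : IsCompOf S C) (hD : IsCompOf S D)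
    (hCD : C ≠ D) {p q : ℝ × ℝ} (hp : p ∈ C) (hq : q ∈ D) (hax : p.1 = q.1 ∨ p.2 = q.2) :
    δ < dist p q := by
  by_contra! hpq
  have hqC : q ∈ C :=
    hS.segment_subset_of_isCompOf hC hp (hD.subset hq) hax hpq (right_mem_segment ℝ p q)
  exact hCD (hC.eq_of_mem_of_mem hD hqC hq)

lemma convex_inter_of_aligned (hS : IsAxisBridged δ S) (hdist : ∀ a ∈ S, ∀ b ∈ S, dist a b ≤ δ)
    (hL : Convex ℝ L) (hax : ∀ a ∈ L, ∀ b ∈ L, a.1 = b.1 ∨ a.2 = b.2) : Convex ℝ (S ∩ L) :=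
  convex_iff_segment_subset.2 fun a ha b hb =>
    subset_inter (hS ha.1 hb.1 (hax a ha.2 b hb.2) (hdist a ha.1 b hb.1))
      (hL.segment_subset ha.2 hb.2)

end IsAxisBridged

section Intervals

lemma exists_mem_Icc_dist_le {δ a b x : ℝ} (hδ : 0 ≤ δ) (hab : a ≤ b)
    (hx : x ∈ Icc (a - δ) (b + δ)) : ∃ y ∈ Icc a b, dist x y ≤ δ := by
  obtain ⟨hxa, hxb⟩ := hx
  rcases lt_or_ge x a with hlt | hax
  · exact ⟨a, left_mem_Icc.2 hab, by rw [Real.dist_eq, abs_le]; constructor <;> linarith⟩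
  rcases le_or_gt x b with hxb' | hgt
  · exact ⟨x, ⟨hax, hxb'⟩, by simpa using hδ⟩
  · exact ⟨b, right_mem_Icc.2 hab, by rw [Real.dist_eq, abs_le]; constructor <;> linarith⟩

lemma mapsTo_Ico_or_mapsTo_Ioc_of_isPreconnected {X α : Type*} [TopologicalSpace X]
    [LinearOrder α] [TopologicalSpace α] [OrderClosedTopology α] {s : Set X} {f : X → α}
    {a' a b b' : α} (hs : IsPreconnected s) (hf : ContinuousOn f s) (hab : a ≤ b)
    (hmaps : MapsTo f s (Icc a' b')) (havoid : ∀ p ∈ s, f p ∉ Icc a b) :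
    MapsTo f s (Ico a' a) ∨ MapsTo f s (Ioc b b') := by
  by_contra! h
  simp only [MapsTo, not_forall] at h
  obtain ⟨⟨p, hp, hpa⟩, q, hq, hqb⟩ := h
  have hap : a ≤ f p := not_lt.1 fun hlt => hpa ⟨(hmaps hp).1, hlt⟩
  have hqb : f q ≤ b := not_lt.1 fun hlt => hqb ⟨hlt, (hmaps hq).2⟩
  have hqa : f q ≤ a := (not_le.1 fun hle => havoid q hq ⟨hle, hqb⟩).le
  obtain ⟨r, hr, hra⟩ := hs.intermediate_value hq hp hf ⟨hqa, hap⟩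
  exact havoid r hr ⟨hra.ge, hra.trans_le hab⟩

lemma dist_le_of_mapsTo_Ico_or_Ioc {X : Type*} {s : Set X} {f : X → ℝ} {δ a b : ℝ}
    (hf : MapsTo f s (Ico (a - δ) a) ∨ MapsTo f s (Ioc b (b + δ))) {p q : X} (hp : p ∈ s)
    (hq : q ∈ s) : dist (f p) (f q) ≤ δ := by
  rcases hf with hf | hf
  · simpa using Real.dist_le_of_mem_Icc (Ico_subset_Icc_self (hf hp)) (Ico_subset_Icc_self (hf hq))
  · simpa using Real.dist_le_of_mem_Icc (Ioc_subset_Icc_self (hf hp)) (Ioc_subset_Icc_self (hf hq))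

end Intervals

section Corners

/-- The buffer region of width `δ` around the rectangle `[xlo, xhi] × [ylo, yhi]`; the paper's
`R_□` is the case `δ = 1`, and the influence region is its intersection with the free space. -/
def bufferRegion (δ xlo xhi ylo yhi : ℝ) : Set (ℝ × ℝ) :=
  Icc (xlo - δ) (xhi + δ) ×ˢ Icc (ylo - δ) (yhi + δ)

lemma convex_bufferRegion (δ xlo xhi ylo yhi : ℝ) : Convex ℝ (bufferRegion δ xlo xhi ylo yhi) :=
  (convex_Icc _ _).prod (convex_Icc _ _)

variable {δ xlo xhi ylo yhi : ℝ} {F γR C : Set (ℝ × ℝ)}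

lemma nonneg_of_rect_subset_bufferRegion (hx : xlo ≤ xhi) (hy : ylo ≤ yhi)
    (hR : Icc xlo xhi ×ˢ Icc ylo yhi ⊆ bufferRegion δ xlo xhi ylo yhi) : 0 ≤ δ := by
  have hcorner := hR (mk_mem_prod (left_mem_Icc.2 hx) (left_mem_Icc.2 hy))
  simpa using hcorner.1.1

lemma IsAxisBridged.component_projections_avoid_rect (hF : IsAxisBridged δ F) (hx : xlo ≤ xhi)
    (hy : ylo ≤ yhi)
    (hγR : IsCompOf (F ∩ bufferRegion δ xlo xhi ylo yhi) γR)
    (hR : Icc xlo xhi ×ˢ Icc ylo yhi ⊆ γR)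
    (hC : IsCompOf (F ∩ bufferRegion δ xlo xhi ylo yhi) C)
    (hne : C ≠ γR) {p : ℝ × ℝ} (hp : p ∈ C) : p.1 ∉ Icc xlo xhi ∧ p.2 ∉ Icc ylo yhi := by
  have hI := hF.inter_convex (convex_bufferRegion δ xlo xhi ylo yhi)
  have hδ : 0 ≤ δ :=
    nonneg_of_rect_subset_bufferRegion hx hy (hR.trans (hγR.subset.trans inter_subset_right))
  have hp_box := (hC.subset hp).2
  constructor <;> intro hpR
  · obtain ⟨y, hyR, hdist⟩ := exists_mem_Icc_dist_le hδ hy hp_box.2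
    have hlt : δ < dist p (p.1, y) :=
      hI.lt_dist_of_isCompOf_of_ne hC hγR hne hp (hR ⟨hpR, hyR⟩) (Or.inl rfl)
    exact hlt.not_ge (dist_prod_same_left.trans_le hdist)
  · obtain ⟨x, hxR, hdist⟩ := exists_mem_Icc_dist_le hδ hx hp_box.1
    have hlt : δ < dist p (x, p.2) :=
      hI.lt_dist_of_isCompOf_of_ne hC hγR hne hp (hR ⟨hxR, hpR⟩) (Or.inr rfl)
    exact hlt.not_ge (dist_prod_same_right.trans_le hdist)

lemma IsAxisBridged.component_projections_one_sided (hF : IsAxisBridged δ F) (hx : xlo ≤ xhi)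
    (hy : ylo ≤ yhi)
    (hγR : IsCompOf (F ∩ bufferRegion δ xlo xhi ylo yhi) γR)
    (hR : Icc xlo xhi ×ˢ Icc ylo yhi ⊆ γR)
    (hC : IsCompOf (F ∩ bufferRegion δ xlo xhi ylo yhi) C)
    (hne : C ≠ γR) :
    (MapsTo Prod.fst C (Ico (xlo - δ) xlo) ∨ MapsTo Prod.fst C (Ioc xhi (xhi + δ))) ∧
      (MapsTo Prod.snd C (Ico (ylo - δ) ylo) ∨ MapsTo Prod.snd C (Ioc yhi (yhi + δ))) :=
  have havoid := fun p (hp : p ∈ C) =>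
    hF.component_projections_avoid_rect hx hy hγR hR hC hne hp
  ⟨mapsTo_Ico_or_mapsTo_Ioc_of_isPreconnected hC.isPreconnected continuousOn_fst hx
      (fun _ hp => (hC.subset hp).2.1) fun p hp => (havoid p hp).1,
    mapsTo_Ico_or_mapsTo_Ioc_of_isPreconnected hC.isPreconnected continuousOn_snd hy
      (fun _ hp => (hC.subset hp).2.2) fun p hp => (havoid p hp).2⟩

theorem tiny_components_in_corners_xyMonotone_general (hF : IsAxisBridged δ F) (hx : xlo ≤ xhi)
    (hy : ylo ≤ yhi)
    (hγR : IsCompOf (F ∩ bufferRegion δ xlo xhi ylo yhi) γR)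
    (hR : Icc xlo xhi ×ˢ Icc ylo yhi ⊆ γR)
    (hC : IsCompOf (F ∩ bufferRegion δ xlo xhi ylo yhi) C)
    (hne : C ≠ γR) :
    (C ⊆ Ico (xlo - δ) xlo ×ˢ Ico (ylo - δ) ylo ∨
      C ⊆ Ico (xlo - δ) xlo ×ˢ Ioc yhi (yhi + δ) ∨
      C ⊆ Ioc xhi (xhi + δ) ×ˢ Ico (ylo - δ) ylo ∨
      C ⊆ Ioc xhi (xhi + δ) ×ˢ Ioc yhi (yhi + δ)) ∧
    (∀ y : ℝ, IsPreconnected (C ∩ {p : ℝ × ℝ | p.2 = y})) ∧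
    (∀ x : ℝ, IsPreconnected (C ∩ {p : ℝ × ℝ | p.1 = x})) := by
  obtain ⟨hfst, hsnd⟩ := hF.component_projections_one_sided hx hy hγR hR hC hne
  have hdist : ∀ a ∈ C, ∀ b ∈ C, dist a b ≤ δ := fun a ha b hb =>
    max_le (dist_le_of_mapsTo_Ico_or_Ioc hfst ha hb) (dist_le_of_mapsTo_Ico_or_Ioc hsnd ha hb)
  have hbridged : IsAxisBridged δ C :=
    (hF.inter_convex (convex_bufferRegion δ xlo xhi ylo yhi)).of_isCompOf hC
  refine ⟨?_, fun y => ?_, fun x => ?_⟩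
  · have hprod {I J : Set ℝ} (hI : MapsTo Prod.fst C I) (hJ : MapsTo Prod.snd C J) :
        C ⊆ I ×ˢ J := fun _ hp => ⟨hI hp, hJ hp⟩
    rcases hfst with hleft | hright <;> rcases hsnd with hbelow | habove
    · exact Or.inl (hprod hleft hbelow)
    · exact Or.inr (Or.inl (hprod hleft habove))
    · exact Or.inr (Or.inr (Or.inl (hprod hright hbelow)))
    · exact Or.inr (Or.inr (Or.inr (hprod hright habove)))
  · have hline : Convex ℝ {p : ℝ × ℝ | p.2 = y} :=
      (convex_singleton y).linear_preimage (LinearMap.snd ℝ ℝ ℝ)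
    exact (hbridged.convex_inter_of_aligned hdist hline
      fun _ ha _ hb => Or.inr (ha.trans hb.symm)).isPreconnected
  · have hline : Convex ℝ {p : ℝ × ℝ | p.1 = x} :=
      (convex_singleton x).linear_preimage (LinearMap.fst ℝ ℝ ℝ)
    exact (hbridged.convex_inter_of_aligned hdist hline
      fun _ ha _ hb => Or.inl (ha.trans hb.symm)).isPreconnected

end Corners

/-- Every connected component of the influence region `I(R)` other than
the giant component is contained in one of the four corner squares of `R_□`, and its
intersection with every horizontal line and with every vertical line is connected. -/
theorem tiny_components_in_corners_xyMonotone
    (W : Set (ℝ × ℝ)) (hW : IsRectilinearEnv W)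
    (F : Set (ℝ × ℝ)) (hF : F = freeSpace W)
    (sA sB tA tB : ℝ × ℝ)
    (P : Set (ℝ × ℝ)) (hP : P = {sA, sB, tA, tB})
    (hsA : sA ∈ F) (hsB : sB ∈ F) (htA : tA ∈ F) (htB : tB ∈ F)
    (xlo xhi ylo yhi : ℝ) (R : Set (ℝ × ℝ))
    (hR : IsCorridor F P R) (hRrect : R = Icc xlo xhi ×ˢ Icc ylo yhi)
    (Rbox : Set (ℝ × ℝ))
    (hRbox : Rbox = Icc (xlo - 1) (xhi + 1) ×ˢ Icc (ylo - 1) (yhi + 1))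
    (γR : Set (ℝ × ℝ)) (hγR : IsCompOf (F ∩ Rbox) γR) (hRsub : R ⊆ γR)
    (C : Set (ℝ × ℝ)) (hC : IsCompOf (F ∩ Rbox) C) (hCne : C ≠ γR) :
    (C ⊆ Ico (xlo - 1) xlo ×ˢ Ico (ylo - 1) ylo ∨
      C ⊆ Ico (xlo - 1) xlo ×ˢ Ioc yhi (yhi + 1) ∨
      C ⊆ Ioc xhi (xhi + 1) ×ˢ Ico (ylo - 1) ylo ∨
      C ⊆ Ioc xhi (xhi + 1) ×ˢ Ioc yhi (yhi + 1)) ∧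
    (∀ y : ℝ, IsPreconnected (C ∩ {p : ℝ × ℝ | p.2 = y})) ∧
    (∀ x : ℝ, IsPreconnected (C ∩ {p : ℝ × ℝ | p.1 = x})) := by
  subst hF hRrect hRbox
  obtain ⟨hx, hy⟩ := prod_nonempty_iff.1 hR.nonempty
  exact tiny_components_in_corners_xyMonotone_general (isAxisBridged_freeSpace W)
    (nonempty_Icc.1 hx) (nonempty_Icc.1 hy) hγR hRsub hC hCne

end
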